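/- arXiv:1303.4268 — 2 statements merged into one kernel-verified Lean document; each statement's English description precedes it below -/
import Mathlib

section
/- Fix σ > 0 and k ∈ ℝ with k ≠ 0. Then, as τ → 0+, the Black–Scholes forward-start call price satisfies C_BS(τ,k,σ) = (1−e^k)·1_{{k<0}} + (e^{k/2 − k²/(2σ²τ)}·(σ²τ)^{3/2}/(k²·√(2π)))·[1 − (3/k² + 1/8)·σ²τ + o(τ)]; that is, the ratio (C_BS(τ,k,σ) − (1−e^k)·1_{{k<0}}) / (e^{k/2 − k²/(2σ²τ)}·(σ²τ)^{3/2}/(k²·√(2π))) equals 1 − (3/k² + 1/8)·σ²τ + o(τ) as τ → 0+. -/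
/-!
In the total volatility `s = σ√τ`, the price minus its limit `(1 - e^k) 1_{k < 0}` tends to `0` as
`s → 0+`, and because `φ(d₊) = e^k φ(d₋)` its derivative collapses to
`φ(d₊) = e^{-k²/(2s²)} (2π)^{-1/2} e^{k/2} e^{-s²/8}`. A primitive of
`e^{-a/s²} (c₀ + c₂ s² + o(s²))` vanishing at `0+` is expanded by l'Hôpital's rule against
`e^{-a/s²} s⁵`; here `a = k²/2`.
-/

open Filter Topology Asymptotics MeasureTheory

noncomputable section

/-- the standard normal cumulative distribution function. -/
def stdNormalCDF (x : ℝ) : ℝ :=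
  (Real.sqrt (2 * Real.pi))⁻¹ * ∫ y in Set.Iic x, Real.exp (-(y ^ 2) / 2)

/-- Black–Scholes call price with log-strike `k`, maturity `τ` and volatility `σ`. -/
def CBS (τ k σ : ℝ) : ℝ :=
  stdNormalCDF (-k / (σ * Real.sqrt τ) + σ * Real.sqrt τ / 2) -
    Real.exp k * stdNormalCDF (-k / (σ * Real.sqrt τ) - σ * Real.sqrt τ / 2)

section

open Real ProbabilityTheory

theorem hasDerivAt_integral_Iic {E : Type*} [NormedAddCommGroup E] [NormedSpace ℝ E]
    [CompleteSpace E] {f : ℝ → E} {x : ℝ} (hf : Integrable f) (hx : ContinuousAt f x) :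
    HasDerivAt (fun u ↦ ∫ y in Set.Iic u, f y) (f x) x := by
  have hsplit : (fun u ↦ ∫ y in Set.Iic u, f y) =
      fun u ↦ (∫ y in Set.Iic x, f y) + ∫ y in x..u, f y := by
    ext u
    rw [← intervalIntegral.integral_Iic_sub_Iic hf.integrableOn hf.integrableOn]
    abel
  rw [hsplit]
  exact (intervalIntegral.integral_hasDerivAt_right hf.intervalIntegrable
    hf.aestronglyMeasurable.stronglyMeasurableAtFilter hx).const_add _

theorem stdNormalCDF_eq_integral_gaussianPDFReal (x : ℝ) :
    stdNormalCDF x = ∫ y in Set.Iic x, gaussianPDFReal 0 1 y := by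
  simp [stdNormalCDF, gaussianPDFReal, integral_const_mul]

theorem stdNormalCDF_eq_cdf : stdNormalCDF = cdf (gaussianReal 0 1) := by
  ext x
  rw [stdNormalCDF_eq_integral_gaussianPDFReal, cdf_eq_real, Measure.real,
    gaussianReal_apply_eq_integral 0 one_ne_zero,
    ENNReal.toReal_ofReal (integral_nonneg (gaussianPDFReal_nonneg 0 1))]

theorem hasDerivAt_stdNormalCDF (x : ℝ) :
    HasDerivAt stdNormalCDF (gaussianPDFReal 0 1 x) x := by
  have hcont : Continuous (gaussianPDFReal 0 1) := by
    unfold gaussianPDFReal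
    fun_prop
  rw [funext stdNormalCDF_eq_integral_gaussianPDFReal]
  exact hasDerivAt_integral_Iic (integrable_gaussianPDFReal 0 1) hcont.continuousAt

theorem tendsto_stdNormalCDF_neg_div_add {k b : ℝ} (hk : k ≠ 0) {u : ℝ → ℝ}
    (hu : Tendsto u (𝓝[>] 0) (𝓝 b)) :
    Tendsto (fun s ↦ stdNormalCDF (-k / s + u s)) (𝓝[>] 0) (𝓝 (if k < 0 then 1 else 0)) := by
  rw [stdNormalCDF_eq_cdf]
  have hinv : Tendsto (fun s : ℝ ↦ s⁻¹) (𝓝[>] 0) atTop := tendsto_inv_nhdsGT_zero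
  rcases hk.lt_or_gt with hneg | hpos
  · rw [if_pos hneg]
    exact (tendsto_cdf_atTop _).comp ((hinv.const_mul_atTop (neg_pos.2 hneg)).atTop_add hu)
  · rw [if_neg hpos.not_gt]
    exact (tendsto_cdf_atBot _).comp
      ((hinv.const_mul_atTop_of_neg (neg_lt_zero.2 hpos)).atBot_add hu)

section ExpNegDivSq

variable {a : ℝ}

theorem hasDerivAt_exp_neg_div_sq_mul {p : ℝ → ℝ} {p' s : ℝ} (hs : s ≠ 0)
    (hp : HasDerivAt p p' s) :
    HasDerivAt (fun t ↦ exp (-a / t ^ 2) * p t)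
      (exp (-a / s ^ 2) * (2 * a / s ^ 3 * p s + p')) s := by
  have hexponent : HasDerivAt (fun t ↦ -a / t ^ 2) (2 * a / s ^ 3) s := by
    refine ((hasDerivAt_const s (-a)).fun_div (hasDerivAt_pow 2 s) (by positivity)).congr_deriv ?_
    field_simp
    ring
  exact (hexponent.exp.fun_mul hp).congr_deriv (by ring)

theorem tendsto_exp_neg_div_sq_mul_zero (ha : 0 ≤ a) {l : Filter ℝ} {p : ℝ → ℝ}
    (hp : Tendsto p l (𝓝 0)) : Tendsto (fun s ↦ exp (-a / s ^ 2) * p s) l (𝓝 0) := by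
  have hle (s : ℝ) : exp (-a / s ^ 2) ≤ 1 :=
    exp_le_one_iff.2 (div_nonpos_of_nonpos_of_nonneg (neg_nonpos.2 ha) (sq_nonneg s))
  refine (IsBigO.of_bound' (.of_forall fun s ↦ ?_)).trans_tendsto hp
  rw [norm_mul, norm_of_nonneg (exp_pos _).le]
  exact mul_le_of_le_one_left (norm_nonneg _) (hle s)

theorem isLittleO_exp_neg_div_sq_mul_pow_of_hasDerivAt (ha : 0 < a) {n : ℕ} {F g : ℝ → ℝ}
    (hF : ∀ᶠ s in 𝓝[>] 0, HasDerivAt F (exp (-a / s ^ 2) * g s) s)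
    (hF0 : Tendsto F (𝓝[>] 0) (𝓝 0)) (hg : g =o[𝓝[>] 0] fun s ↦ s ^ n) :
    F =o[𝓝[>] 0] fun s ↦ exp (-a / s ^ 2) * s ^ (n + 3) := by
  have hpos : ∀ᶠ s : ℝ in 𝓝[>] 0, 0 < s := self_mem_nhdsWithin
  set q : ℝ → ℝ := fun s ↦ 2 * a / s ^ 3 * s ^ (n + 3) + (n + 3 : ℕ) * s ^ (n + 2) with hq
  have hpow_le {s : ℝ} (hs : 0 < s) : s ^ n ≤ (2 * a)⁻¹ * q s := by
    have hq_eq : q s = 2 * a * s ^ n + (n + 3 : ℕ) * s ^ (n + 2) := by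
      simp only [hq]
      field_simp
      ring
    rw [hq_eq, le_inv_mul_iff₀ (by positivity), le_add_iff_nonneg_right]
    positivity
  have hpow : (fun s ↦ s ^ n) =O[𝓝[>] 0] q := by
    refine .of_bound (2 * a)⁻¹ (hpos.mono fun s hs ↦ ?_)
    rw [norm_of_nonneg (by positivity), norm_of_nonneg (by positivity)]
    exact hpow_le hs
  have hpow_tendsto : Tendsto (fun s : ℝ ↦ s ^ (n + 3)) (𝓝[>] 0) (𝓝 0) :=
    ((continuous_pow (n + 3)).tendsto' 0 0 (by simp)).mono_left nhdsWithin_le_nhds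
  refine isLittleO_of_tendsto' (hpos.mono fun s hs h ↦ absurd h (by positivity)) ?_
  refine HasDerivAt.lhopital_zero_nhdsGT hF (g' := fun s ↦ exp (-a / s ^ 2) * q s)
    (hpos.mono fun s hs ↦ hasDerivAt_exp_neg_div_sq_mul hs.ne' (hasDerivAt_pow (n + 3) s))
    (hpos.mono fun s hs ↦ by positivity) hF0
    (tendsto_exp_neg_div_sq_mul_zero ha.le hpow_tendsto) ?_
  exact ((isBigO_refl _ _).mul_isLittleO (hg.trans_isBigO hpow)).tendsto_div_nhds_zero

theorem isLittleO_sub_expansion_of_hasDerivAt_exp_neg_div_sq_mul (ha : 0 < a) {c₀ c₂ : ℝ}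
    {F f : ℝ → ℝ} (hF : ∀ᶠ s in 𝓝[>] 0, HasDerivAt F (exp (-a / s ^ 2) * f s) s)
    (hF0 : Tendsto F (𝓝[>] 0) (𝓝 0))
    (hf : (fun s ↦ f s - (c₀ + c₂ * s ^ 2)) =o[𝓝[>] 0] fun s ↦ s ^ 2) :
    (fun s ↦ F s - exp (-a / s ^ 2) *
        (s ^ 3 / (2 * a) * (c₀ + (c₂ - 3 * c₀ / (2 * a)) * s ^ 2)))
      =o[𝓝[>] 0] fun s ↦ exp (-a / s ^ 2) * s ^ 5 := by
  set d := (c₂ - 3 * c₀ / (2 * a)) / (2 * a) with hd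
  set p : ℝ → ℝ := fun s ↦ c₀ / (2 * a) * s ^ 3 + d * s ^ 5 with hp
  have hp_eq (s : ℝ) : s ^ 3 / (2 * a) * (c₀ + (c₂ - 3 * c₀ / (2 * a)) * s ^ 2) = p s := by
    simp only [hp, hd]
    ring
  have hp_deriv (s : ℝ) : HasDerivAt p (c₀ / (2 * a) * (3 * s ^ 2) + d * (5 * s ^ 4)) s := by
    simpa using ((hasDerivAt_pow 3 s).const_mul (c₀ / (2 * a))).fun_add
      ((hasDerivAt_pow 5 s).const_mul d)
  have hp_tendsto : Tendsto p (𝓝[>] 0) (𝓝 0) :=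
    (Continuous.tendsto' (by fun_prop) 0 0 (by simp [hp])).mono_left nhdsWithin_le_nhds
  simp only [hp_eq]
  refine isLittleO_exp_neg_div_sq_mul_pow_of_hasDerivAt ha (n := 2)
    (g := fun s ↦ f s - (c₀ + c₂ * s ^ 2) - 5 * d * s ^ 4) ?_ ?_ ?_
  · filter_upwards [hF, self_mem_nhdsWithin] with s hFs (hs : 0 < s)
    refine (hFs.fun_sub (hasDerivAt_exp_neg_div_sq_mul hs.ne' (hp_deriv s))).congr_deriv ?_
    simp only [hp, hd]
    field_simp
    ring
  · simpa using hF0.sub (tendsto_exp_neg_div_sq_mul_zero ha.le hp_tendsto)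
  · exact hf.sub (((isLittleO_pow_pow (by norm_num)).mono nhdsWithin_le_nhds).const_mul_left _)

end ExpNegDivSq

theorem CBS_eq_CBS_one (τ k σ : ℝ) : CBS τ k σ = CBS 1 k (σ * √τ) := by
  simp [CBS]

/-- The time value of the call: the price minus its limit `(1 - e^k) 1_{k < 0}` at maturity `0+`
(the intrinsic value), as a function of the total volatility `s = σ√τ`, which is encoded as
volatility `s` over maturity `1`. -/
def timeValue (k s : ℝ) : ℝ :=
  CBS 1 k s - (1 - exp k) * (if k < 0 then 1 else 0)

theorem timeValue_eq (k s : ℝ) :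
    timeValue k s = stdNormalCDF (-k / s + s / 2) - exp k * stdNormalCDF (-k / s - s / 2) -
      (1 - exp k) * (if k < 0 then 1 else 0) := by
  simp [timeValue, CBS]

theorem tendsto_timeValue_zero {k : ℝ} (hk : k ≠ 0) :
    Tendsto (timeValue k) (𝓝[>] 0) (𝓝 0) := by
  have hhalf : Tendsto (fun s : ℝ ↦ s / 2) (𝓝[>] 0) (𝓝 0) :=
    (Continuous.tendsto' (by fun_prop) 0 0 (by simp)).mono_left nhdsWithin_le_nhds
  have hlim := ((tendsto_stdNormalCDF_neg_div_add hk hhalf).sub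
    ((tendsto_stdNormalCDF_neg_div_add hk hhalf.neg).const_mul (exp k))).sub_const
      ((1 - exp k) * (if k < 0 then 1 else 0))
  rw [← one_sub_mul, sub_self] at hlim
  exact hlim.congr fun s ↦ by rw [timeValue_eq, ← sub_eq_add_neg]

theorem exp_mul_gaussianPDFReal_neg_div_sub (k : ℝ) {s : ℝ} (hs : s ≠ 0) :
    exp k * gaussianPDFReal 0 1 (-k / s - s / 2) = gaussianPDFReal 0 1 (-k / s + s / 2) := by
  simp only [gaussianPDFReal]
  rw [mul_left_comm, ← exp_add]
  congr 2
  push_cast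
  field_simp
  ring

theorem gaussianPDFReal_neg_div_add (k : ℝ) {s : ℝ} (hs : s ≠ 0) :
    gaussianPDFReal 0 1 (-k / s + s / 2) =
      exp (-(k ^ 2 / 2) / s ^ 2) * ((√(2 * π))⁻¹ * exp (k / 2) * exp (-s ^ 2 / 8)) := by
  have hexp : exp (-(-k / s + s / 2) ^ 2 / 2) =
      exp (-(k ^ 2 / 2) / s ^ 2) * (exp (k / 2) * exp (-s ^ 2 / 8)) := by
    rw [← exp_add, ← exp_add]
    congr 1
    field_simp
    ring
  simp only [gaussianPDFReal, NNReal.coe_one, mul_one, sub_zero, hexp]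
  ring

theorem hasDerivAt_timeValue (k : ℝ) {s : ℝ} (hs : s ≠ 0) :
    HasDerivAt (timeValue k) (gaussianPDFReal 0 1 (-k / s + s / 2)) s := by
  have hdiv : HasDerivAt (fun t ↦ -k / t) (k / s ^ 2) s := by
    simpa [div_eq_mul_inv] using (hasDerivAt_inv hs).const_mul (-k)
  have hhalf : HasDerivAt (fun t : ℝ ↦ t / 2) (1 / 2) s := (hasDerivAt_id s).div_const 2
  have hplus := (hasDerivAt_stdNormalCDF (-k / s + s / 2)).comp s (hdiv.fun_add hhalf)
  have hminus := (hasDerivAt_stdNormalCDF (-k / s - s / 2)).comp s (hdiv.fun_sub hhalf)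
  have hvalue := (hplus.sub (hminus.const_mul (exp k))).sub_const
    ((1 - exp k) * (if k < 0 then 1 else 0))
  refine (hvalue.congr_of_eventuallyEq (.of_forall (timeValue_eq k))).congr_deriv ?_
  rw [← mul_assoc, exp_mul_gaussianPDFReal_neg_div_sub k hs]
  ring

theorem isLittleO_exp_const_mul_sq_sub (c : ℝ) :
    (fun s : ℝ ↦ exp (c * s ^ 2) - (1 + c * s ^ 2)) =o[𝓝 0] fun s ↦ s ^ 2 := by
  have htendsto : Tendsto (fun s : ℝ ↦ c * s ^ 2) (𝓝 0) (𝓝 0) :=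
    Continuous.tendsto' (by fun_prop) 0 0 (by simp)
  have hexp : (fun x : ℝ ↦ exp x - (1 + x)) =o[𝓝 0] fun x ↦ x := by
    simpa [sub_sub] using (hasDerivAt_exp 0).isLittleO
  exact (hexp.comp_tendsto htendsto).trans_isBigO (isBigO_const_mul_self _ _ _)

theorem isLittleO_timeValue_sub_expansion {k : ℝ} (hk : k ≠ 0) :
    (fun s ↦ timeValue k s - exp (-(k ^ 2 / 2) / s ^ 2) *
        (s ^ 3 / k ^ 2 * ((√(2 * π))⁻¹ * exp (k / 2) * (1 - (3 / k ^ 2 + 1 / 8) * s ^ 2))))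
      =o[𝓝[>] 0] fun s ↦ exp (-(k ^ 2 / 2) / s ^ 2) * s ^ 5 := by
  set c := (√(2 * π))⁻¹ * exp (k / 2)
  have hderiv : ∀ᶠ s in 𝓝[>] 0, HasDerivAt (timeValue k)
      (exp (-(k ^ 2 / 2) / s ^ 2) * (c * exp (-s ^ 2 / 8))) s := by
    filter_upwards [self_mem_nhdsWithin] with s (hs : 0 < s)
    exact gaussianPDFReal_neg_div_add k hs.ne' ▸ hasDerivAt_timeValue k hs.ne'
  have hdensity : (fun s ↦ c * exp (-s ^ 2 / 8) - (c + -c / 8 * s ^ 2)) =o[𝓝[>] 0]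
      fun s ↦ s ^ 2 :=
    ((isLittleO_exp_const_mul_sq_sub (-1 / 8)).mono nhdsWithin_le_nhds).const_mul_left c
      |>.congr_left fun s ↦ by ring_nf
  refine (isLittleO_sub_expansion_of_hasDerivAt_exp_neg_div_sq_mul (by positivity) hderiv
    (tendsto_timeValue_zero hk) hdensity).congr_left fun s ↦ ?_
  ring

theorem isLittleO_timeValue_div_sub {k : ℝ} (hk : k ≠ 0) :
    (fun s ↦ timeValue k s /
        (exp (k / 2 - k ^ 2 / (2 * s ^ 2)) * s ^ 3 / (k ^ 2 * √(2 * π))) -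
          (1 - (3 / k ^ 2 + 1 / 8) * s ^ 2))
      =o[𝓝[>] 0] fun s ↦ s ^ 2 := by
  set D : ℝ → ℝ := fun s ↦ exp (k / 2 - k ^ 2 / (2 * s ^ 2)) * s ^ 3 / (k ^ 2 * √(2 * π)) with hD
  have hD_eq (s : ℝ) : D s = exp (-(k ^ 2 / 2) / s ^ 2) *
      (s ^ 3 / k ^ 2 * ((√(2 * π))⁻¹ * exp (k / 2))) := by
    simp only [hD, show k / 2 - k ^ 2 / (2 * s ^ 2) = -(k ^ 2 / 2) / s ^ 2 + k / 2 by ring, exp_add]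
    ring
  have hquot := (isLittleO_timeValue_sub_expansion hk).mul_isBigO
    (isBigO_refl (fun s ↦ (D s)⁻¹) (𝓝[>] 0))
  have hquot' : (fun s ↦ timeValue k s / D s - (1 - (3 / k ^ 2 + 1 / 8) * s ^ 2)) =o[𝓝[>] 0]
      fun s ↦ k ^ 2 * √(2 * π) / exp (k / 2) * s ^ 2 := by
    refine hquot.congr' ?_ ?_ <;>
    · filter_upwards [self_mem_nhdsWithin] with s (hs : 0 < s)
      rw [hD_eq]
      field_simp
  exact hquot'.trans_isBigO (isBigO_const_mul_self _ _ _)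

theorem tendsto_const_mul_sqrt_nhdsGT_zero {σ : ℝ} (hσ : 0 < σ) :
    Tendsto (fun τ ↦ σ * √τ) (𝓝[>] 0) (𝓝[>] 0) := by
  refine tendsto_nhdsWithin_iff.2 ⟨?_, ?_⟩
  · exact (Continuous.tendsto' (by fun_prop) 0 0 (by simp)).mono_left nhdsWithin_le_nhds
  · filter_upwards [self_mem_nhdsWithin] with τ (hτ : 0 < τ)
    exact mul_pos hσ (sqrt_pos.2 hτ)

theorem sq_mul_rpow_three_halves {σ τ : ℝ} (hσ : 0 ≤ σ) (hτ : 0 ≤ τ) :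
    (σ ^ 2 * τ) ^ ((3 : ℝ) / 2) = (σ * √τ) ^ 3 := by
  rw [rpow_div_two_eq_sqrt 3 (by positivity), sqrt_mul (sq_nonneg σ), sqrt_sq hσ, rpow_ofNat]

end

theorem stmt3 (σ k : ℝ) (hσ : 0 < σ) (hk : k ≠ 0) :
    ∃ err : ℝ → ℝ, err =o[𝓝[>] (0 : ℝ)] (fun τ : ℝ => τ) ∧
      ∀ᶠ τ in 𝓝[>] (0 : ℝ),
        (CBS τ k σ - (1 - Real.exp k) * (if k < 0 then 1 else 0)) /
            (Real.exp (k / 2 - k ^ 2 / (2 * σ ^ 2 * τ)) * (σ ^ 2 * τ) ^ ((3 : ℝ) / 2) /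
              (k ^ 2 * Real.sqrt (2 * Real.pi))) =
          1 - (3 / k ^ 2 + 1 / 8) * σ ^ 2 * τ + err τ := by
  refine ⟨fun τ ↦ _ - (1 - (3 / k ^ 2 + 1 / 8) * σ ^ 2 * τ), ?_,
    .of_forall fun τ ↦ (add_sub_cancel _ _).symm⟩
  have hratio := (isLittleO_timeValue_div_sub hk).comp_tendsto
    (tendsto_const_mul_sqrt_nhdsGT_zero hσ)
  have hsq {τ : ℝ} (hτ : 0 < τ) : (σ * √τ) ^ 2 = σ ^ 2 * τ := by
    rw [mul_pow, Real.sq_sqrt hτ.le]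
  refine (hratio.congr' (g₂ := fun τ ↦ σ ^ 2 * τ) ?_ ?_).trans_isBigO
    (isBigO_const_mul_self _ _ _)
  · filter_upwards [self_mem_nhdsWithin] with τ (hτ : 0 < τ)
    simp only [Function.comp_apply, timeValue, ← CBS_eq_CBS_one, hsq hτ, ← mul_assoc,
      sq_mul_rpow_three_halves hσ.le hτ.le]
  · filter_upwards [self_mem_nhdsWithin] with τ hτ using hsq hτ

end
end

section
/- For every real u with |u| < 1/√β_t, the derivative Λ_τ′(u) of the rescaled forward log-mgf is well defined and real for all sufficiently small τ > 0, and lim_{τ→0+} Λ_τ′(u) = 0. -/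
open Filter Topology Asymptotics MeasureTheory

noncomputable section


/-- sign convention of the paper: 1 if `0 ≤ x`, -1 otherwise. -/
def sgn' (x : ℝ) : ℝ := if 0 ≤ x then 1 else -1

/-- principal-branch complex square root `d` of the Heston Riccati discriminant. -/
def hestD (κ ρ ξ : ℝ) (w : ℂ) : ℂ :=
  (((κ : ℂ) - (ρ : ℂ) * (ξ : ℂ) * w) ^ 2 + w * (1 - w) * (ξ : ℂ) ^ 2) ^ ((1 : ℂ) / 2)

def hestGamma (κ ρ ξ : ℝ) (w : ℂ) : ℂ :=
  ((κ : ℂ) - (ρ : ℂ) * (ξ : ℂ) * w - hestD κ ρ ξ w) /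
    ((κ : ℂ) - (ρ : ℂ) * (ξ : ℂ) * w + hestD κ ρ ξ w)

def hestB (κ ρ ξ : ℝ) (w : ℂ) (τ : ℝ) : ℂ :=
  (((κ : ℂ) - (ρ : ℂ) * (ξ : ℂ) * w - hestD κ ρ ξ w) / (ξ : ℂ) ^ 2) *
    ((1 - Complex.exp (-(hestD κ ρ ξ w) * (τ : ℂ))) /
      (1 - hestGamma κ ρ ξ w * Complex.exp (-(hestD κ ρ ξ w) * (τ : ℂ))))

def hestA (κ θ ρ ξ : ℝ) (w : ℂ) (τ : ℝ) : ℂ :=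
  ((κ * θ / ξ ^ 2 : ℝ) : ℂ) *
    (((κ : ℂ) - (ρ : ℂ) * (ξ : ℂ) * w - hestD κ ρ ξ w) * (τ : ℂ) -
      2 * Complex.log ((1 - hestGamma κ ρ ξ w * Complex.exp (-(hestD κ ρ ξ w) * (τ : ℂ))) /
        (1 - hestGamma κ ρ ξ w)))

def betaT (κ ξ t : ℝ) : ℝ := ξ ^ 2 * (1 - Real.exp (-(κ * t))) / (4 * κ)

/-- explicit Heston forward log-mgf `G_τ(w)`. -/
def hestG (κ θ ξ v ρ t : ℝ) (w : ℂ) (τ : ℝ) : ℂ :=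
  hestA κ θ ρ ξ w τ +
    hestB κ ρ ξ w τ * (v : ℂ) * ((Real.exp (-(κ * t)) : ℝ) : ℂ) /
      (1 - 2 * (betaT κ ξ t : ℂ) * hestB κ ρ ξ w τ) -
    ((2 * κ * θ / ξ ^ 2 : ℝ) : ℂ) *
      Complex.log (1 - 2 * (betaT κ ξ t : ℂ) * hestB κ ρ ξ w τ)

/-- rescaled forward log-mgf, for complex argument. -/
def hestLambdaC (κ θ ξ v ρ t τ : ℝ) (z : ℂ) : ℂ :=
  ((Real.sqrt τ : ℝ) : ℂ) * hestG κ θ ξ v ρ t (z / ((Real.sqrt τ : ℝ) : ℂ)) τ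

/-- rescaled forward log-mgf `Λ_τ(u) = √τ · G_τ(u/√τ)`. -/
def hestLambda (κ θ ξ v ρ t τ : ℝ) (u : ℝ) : ℂ :=
  hestLambdaC κ θ ξ v ρ t τ (u : ℂ)

/-- `D_{t,τ}`: the maximal open interval containing `0` on which `Λ_τ` is real-valued. -/
def hestDom (κ θ ξ v ρ t τ : ℝ) : Set ℝ :=
  connectedComponentIn (interior {u : ℝ | (hestLambda κ θ ξ v ρ t τ u).im = 0}) 0

/-!
With `a = κ - ρξw` and `d = d(w)`, multiplying numerators and denominators by `exp (dτ/2)` gives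
`(1 - γ exp (-dτ)) / (1 - γ) = exp (-dτ/2) M` and `B = w (w - 1) (sinh (dτ/2) / d) / M`, where
`M = cosh (dτ/2) + (a/d) sinh (dτ/2)`. These expressions are even in `d`, so the branch of the
square root disappears. At `τ = s²` and `w = x/s` the number `(dτ/2)²` is a polynomial in `(s, x)`
vanishing at `s = 0`; hence the logarithms stay on their principal branch for small `s`, and `M`,
`B` and `G_{s²}(x/s)` become real functions of `(s, x)` that are smooth across `s = 0`, with `M = 1`
and `B = x²/2` there. The manipulation needs `d ≠ 0` and `a + d ≠ 0`, which hold for all small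
`s > 0`: `s² d²` is a quadratic polynomial in `s` with leading coefficient `κ²`, and
`(a - d)(a + d) = ξ² w (w - 1)`. So `Λ_τ(x) = √τ F(√τ, x)` with `F` smooth near `(0, u)` as soon as
`1 - 2 β_t B = 1 - β_t u² > 0`, and `Λ_τ'(u) = √τ ∂ₓF(√τ, u) → 0`.
-/

section Calculus

variable {𝕜 : Type*} [NontriviallyNormedField 𝕜]

theorem contDiff_tsum_mul_pow_of_norm_le_inv_factorial [CompleteSpace 𝕜] {c : ℕ → 𝕜}
    {n : WithTop ℕ∞} (hc : ∀ k, ‖c k‖ ≤ (k.factorial : ℝ)⁻¹) :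
    ContDiff 𝕜 n fun z => ∑' k, c k * z ^ k := by
  have hradius : (FormalMultilinearSeries.ofScalars 𝕜 c).radius = ⊤ := by
    refine FormalMultilinearSeries.radius_eq_top_of_summable_norm _ fun r => ?_
    refine (Real.summable_pow_div_factorial r).of_nonneg_of_le (fun k => by positivity) fun k => ?_
    rw [FormalMultilinearSeries.ofScalars_norm, div_eq_inv_mul]
    gcongr
    exact hc k
  have hsum := (FormalMultilinearSeries.ofScalars 𝕜 c).hasFPowerSeriesOnBall (by simp [hradius])
  rw [hradius] at hsum
  have hanalytic : AnalyticOnNhd 𝕜 (FormalMultilinearSeries.ofScalars 𝕜 c).sum Set.univ :=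
    fun z _ => hsum.analyticAt_of_mem (by simp)
  have heq : (FormalMultilinearSeries.ofScalars 𝕜 c).sum = fun z => ∑' k, c k * z ^ k :=
    FormalMultilinearSeries.ofScalarsSum_eq_tsum c
  exact heq ▸ hanalytic.contDiff

variable {E G : Type*} [NormedAddCommGroup E] [NormedSpace 𝕜 E]
  [NormedAddCommGroup G] [NormedSpace 𝕜 G] {F : E → 𝕜 → G} {s₀ : E} {u : 𝕜}

theorem eventually_differentiableAt_of_contDiffAt_uncurry
    (hF : ContDiffAt 𝕜 1 (Function.uncurry F) (s₀, u)) :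
    ∀ᶠ s in 𝓝 s₀, DifferentiableAt 𝕜 (F s) u := by
  filter_upwards [(hF.eventually (by simp)).curry_nhds] with s hs
  exact (hs.self_of_nhds.differentiableAt one_ne_zero).comp (f := fun x => (s, x)) u (by fun_prop)

theorem continuousAt_deriv_of_contDiffAt_uncurry
    (hF : ContDiffAt 𝕜 1 (Function.uncurry F) (s₀, u)) :
    ContinuousAt (fun s => deriv (F s) u) s₀ := by
  have hfderiv : ContinuousAt (fun s => fderiv 𝕜 (F s) u) s₀ :=
    (ContDiffAt.fderiv (m := 0) hF contDiffAt_const (by simp)).continuousAt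
  exact hfderiv.clm_apply continuousAt_const

theorem tendsto_sqrt_nhdsGT_zero : Tendsto Real.sqrt (𝓝[>] 0) (𝓝[>] 0) := by
  refine tendsto_nhdsWithin_iff.mpr ⟨?_, ?_⟩
  · exact (Real.continuous_sqrt.tendsto' 0 0 Real.sqrt_zero).mono_left nhdsWithin_le_nhds
  · filter_upwards [self_mem_nhdsWithin] with τ hτ using Real.sqrt_pos.mpr hτ

end Calculus

section EvenHyperbolic

/-- The entire function `y ↦ cosh √y`. Defining it by its power series makes it smooth at `0` and
correct for `y < 0`, where `Real.sqrt y` would be `0`. -/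
def coshSqrt (y : ℝ) : ℝ := ∑' n : ℕ, ((2 * n).factorial : ℝ)⁻¹ * y ^ n

/-- The entire function `y ↦ sinh √y / √y`, defined by its power series for the same reasons as
`coshSqrt`. -/
def sinhcSqrt (y : ℝ) : ℝ := ∑' n : ℕ, ((2 * n + 1).factorial : ℝ)⁻¹ * y ^ n

theorem contDiff_coshSqrt {n : WithTop ℕ∞} : ContDiff ℝ n coshSqrt := by
  refine contDiff_tsum_mul_pow_of_norm_le_inv_factorial fun k => ?_
  rw [norm_inv, Real.norm_natCast]
  gcongr
  omega

theorem contDiff_sinhcSqrt {n : WithTop ℕ∞} : ContDiff ℝ n sinhcSqrt := by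
  refine contDiff_tsum_mul_pow_of_norm_le_inv_factorial fun k => ?_
  rw [norm_inv, Real.norm_natCast]
  gcongr
  omega

variable {y : ℝ} {q : ℂ}

theorem ofReal_coshSqrt_of_sq_eq (hq : q ^ 2 = y) : (coshSqrt y : ℂ) = Complex.cosh q := by
  simp only [coshSqrt, Complex.ofReal_tsum, Complex.ofReal_mul, Complex.ofReal_inv,
    Complex.ofReal_pow, Complex.ofReal_natCast, ← hq, ← pow_mul]
  simpa only [div_eq_inv_mul] using (Complex.hasSum_cosh q).tsum_eq

theorem mul_ofReal_sinhcSqrt_of_sq_eq (hq : q ^ 2 = y) :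
    q * (sinhcSqrt y : ℂ) = Complex.sinh q := by
  simp only [sinhcSqrt, Complex.ofReal_tsum, Complex.ofReal_mul, Complex.ofReal_inv,
    Complex.ofReal_pow, Complex.ofReal_natCast, ← hq, ← pow_mul, ← tsum_mul_left]
  simpa only [div_eq_inv_mul, pow_succ', mul_left_comm] using (Complex.hasSum_sinh q).tsum_eq

theorem coshSqrt_zero : coshSqrt 0 = 1 :=
  (tsum_eq_single 0 (by simp +contextual)).trans (by simp)

theorem sinhcSqrt_zero : sinhcSqrt 0 = 1 :=
  (tsum_eq_single 0 (by simp +contextual)).trans (by simp)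

end EvenHyperbolic

section StableForm

variable {κ θ ρ ξ τ : ℝ} {w : ℂ}

/-- The denominator `M = cosh (dτ/2) + (κ - ρξw)/d · sinh (dτ/2)` of the form of the Heston
coefficients that is even in `d`. -/
def hestDenom (κ ρ ξ : ℝ) (w : ℂ) (τ : ℝ) : ℂ :=
  Complex.cosh (hestD κ ρ ξ w * τ / 2) +
    ((κ : ℂ) - ρ * ξ * w) / hestD κ ρ ξ w * Complex.sinh (hestD κ ρ ξ w * τ / 2)

theorem hestD_sq (κ ρ ξ : ℝ) (w : ℂ) :
    hestD κ ρ ξ w ^ 2 = ((κ : ℂ) - ρ * ξ * w) ^ 2 + w * (1 - w) * (ξ : ℂ) ^ 2 := by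
  simpa only [hestD, one_div, Nat.cast_ofNat] using Complex.cpow_nat_inv_pow _ two_ne_zero

theorem drift_sub_mul_drift_add_hestD (κ ρ ξ : ℝ) (w : ℂ) :
    ((κ : ℂ) - ρ * ξ * w - hestD κ ρ ξ w) * ((κ : ℂ) - ρ * ξ * w + hestD κ ρ ξ w) =
      (ξ : ℂ) ^ 2 * w * (w - 1) := by
  linear_combination -hestD_sq κ ρ ξ w

theorem hestD_zero (hκ : 0 < κ) : hestD κ ρ ξ 0 = κ := by
  simpa [hestD] using Complex.sq_cpow_two_inv (x := κ) (by simpa using hκ)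

theorem drift_add_hestD_ne_zero (hκ : 0 < κ) (hξ : ξ ≠ 0) (hw : w ≠ 1) :
    (κ : ℂ) - ρ * ξ * w + hestD κ ρ ξ w ≠ 0 := by
  intro hsum
  rcases eq_or_ne w 0 with rfl | hw0
  · rw [hestD_zero hκ] at hsum
    norm_num [hκ.ne'] at hsum
  · have hprod := drift_sub_mul_drift_add_hestD κ ρ ξ w
    simp [hsum, hw0, hξ, sub_eq_zero, hw] at hprod

theorem one_sub_exp_neg_two_mul (q : ℂ) :
    1 - Complex.exp (-(2 * q)) = 2 * Complex.exp (-q) * Complex.sinh q := by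
  rw [mul_right_comm, Complex.two_sinh, sub_mul, ← Complex.exp_add, ← Complex.exp_add]
  rw [add_neg_cancel, Complex.exp_zero, two_mul, neg_add]

theorem one_sub_hestGamma_mul_exp (hd : hestD κ ρ ξ w ≠ 0)
    (had : (κ : ℂ) - ρ * ξ * w + hestD κ ρ ξ w ≠ 0) :
    1 - hestGamma κ ρ ξ w * Complex.exp (-(hestD κ ρ ξ w) * τ) =
      2 * hestD κ ρ ξ w / ((κ : ℂ) - ρ * ξ * w + hestD κ ρ ξ w) *
        (Complex.exp (-(hestD κ ρ ξ w * τ / 2)) * hestDenom κ ρ ξ w τ) := by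
  have hexp : Complex.exp (-(hestD κ ρ ξ w) * τ) = Complex.exp (-(hestD κ ρ ξ w * τ / 2)) ^ 2 := by
    rw [← Complex.exp_nat_mul]
    ring_nf
  have hinv : Complex.exp (hestD κ ρ ξ w * τ / 2) * Complex.exp (-(hestD κ ρ ξ w * τ / 2)) = 1 := by
    rw [← Complex.exp_add, add_neg_cancel, Complex.exp_zero]
  rw [hexp, hestGamma, hestDenom, Complex.cosh, Complex.sinh]
  field_simp
  linear_combination (-((κ : ℂ) - ρ * ξ * w + hestD κ ρ ξ w)) * hinv

theorem one_sub_hestGamma (had : (κ : ℂ) - ρ * ξ * w + hestD κ ρ ξ w ≠ 0) :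
    1 - hestGamma κ ρ ξ w = 2 * hestD κ ρ ξ w / ((κ : ℂ) - ρ * ξ * w + hestD κ ρ ξ w) := by
  rw [hestGamma]
  field_simp
  ring

theorem hestB_eq_sinh_div_hestDenom (hξ : ξ ≠ 0) (hd : hestD κ ρ ξ w ≠ 0)
    (had : (κ : ℂ) - ρ * ξ * w + hestD κ ρ ξ w ≠ 0) :
    hestB κ ρ ξ w τ = w * (w - 1) *
      (Complex.sinh (hestD κ ρ ξ w * τ / 2) / hestD κ ρ ξ w) / hestDenom κ ρ ξ w τ := by
  have hξ' : (ξ : ℂ) ≠ 0 := by exact_mod_cast hξ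
  have hnum := one_sub_exp_neg_two_mul (hestD κ ρ ξ w * τ / 2)
  rw [mul_div_cancel₀ _ two_ne_zero, ← neg_mul] at hnum
  rw [hestB, one_sub_hestGamma_mul_exp hd had, hnum]
  field_simp
  linear_combination Complex.sinh (hestD κ ρ ξ w * τ / 2) / hestDenom κ ρ ξ w τ *
    drift_sub_mul_drift_add_hestD κ ρ ξ w

theorem hestA_eq_log_hestDenom {m : ℝ} (hd : hestD κ ρ ξ w ≠ 0)
    (had : (κ : ℂ) - ρ * ξ * w + hestD κ ρ ξ w ≠ 0) (hm : 0 < m)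
    (hdenom : hestDenom κ ρ ξ w τ = m) (him : |(hestD κ ρ ξ w * τ / 2).im| < Real.pi) :
    hestA κ θ ρ ξ w τ =
      ((κ * θ / ξ ^ 2 : ℝ) : ℂ) * (((κ : ℂ) - ρ * ξ * w) * τ - 2 * Real.log m) := by
  have hratio : (1 - hestGamma κ ρ ξ w * Complex.exp (-(hestD κ ρ ξ w) * τ)) /
      (1 - hestGamma κ ρ ξ w) = Complex.exp (-(hestD κ ρ ξ w * τ / 2)) * m := by
    rw [one_sub_hestGamma_mul_exp hd had, one_sub_hestGamma had, hdenom]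
    field_simp
  obtain ⟨hlower, hupper⟩ := abs_lt.mp him
  rw [hestA, hratio, Complex.log_mul_ofReal m hm _ (Complex.exp_ne_zero _),
    Complex.log_exp (by rw [Complex.neg_im]; linarith) (by rw [Complex.neg_im]; linarith)]
  ring

end StableForm

section Rescaled

variable {κ θ ξ v ρ t s x : ℝ}

/-- The polynomial `s² d(x/s)²` in `(s, x)`. -/
def hestScaledDiscr (κ ρ ξ s x : ℝ) : ℝ :=
  (κ * s - ρ * ξ * x) ^ 2 + x * (s - x) * ξ ^ 2

/-- The square `(dτ/2)²` of the half angle at `τ = s²`, `w = x/s`. -/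
def hestScaledAngleSq (κ ρ ξ s x : ℝ) : ℝ := s ^ 2 / 4 * hestScaledDiscr κ ρ ξ s x

/-- `hestDenom` at `τ = s²`, `w = x/s`, extended smoothly across `s = 0`. -/
def hestScaledDenom (κ ρ ξ s x : ℝ) : ℝ :=
  coshSqrt (hestScaledAngleSq κ ρ ξ s x) +
    s * (κ * s - ρ * ξ * x) / 2 * sinhcSqrt (hestScaledAngleSq κ ρ ξ s x)

/-- `hestB` at `τ = s²`, `w = x/s`, extended smoothly across `s = 0`. -/
def hestScaledB (κ ρ ξ s x : ℝ) : ℝ :=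
  x * (x - s) / 2 * sinhcSqrt (hestScaledAngleSq κ ρ ξ s x) / hestScaledDenom κ ρ ξ s x

/-- The forward log-mgf `hestG` at `τ = s²`, `w = x/s`, extended smoothly across `s = 0`. -/
def hestScaledG (κ θ ξ v ρ t s x : ℝ) : ℝ :=
  κ * θ / ξ ^ 2 * (s * (κ * s - ρ * ξ * x) - 2 * Real.log (hestScaledDenom κ ρ ξ s x)) +
    hestScaledB κ ρ ξ s x * v * Real.exp (-(κ * t)) /
      (1 - 2 * betaT κ ξ t * hestScaledB κ ρ ξ s x) -
    2 * κ * θ / ξ ^ 2 * Real.log (1 - 2 * betaT κ ξ t * hestScaledB κ ρ ξ s x)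

theorem hestD_rescaled_sq (hs : s ≠ 0) :
    hestD κ ρ ξ (x / s) ^ 2 = ((hestScaledDiscr κ ρ ξ s x / s ^ 2 : ℝ) : ℂ) := by
  have hs' : (s : ℂ) ≠ 0 := by exact_mod_cast hs
  rw [hestD_sq, hestScaledDiscr]
  push_cast
  field_simp

theorem hestD_rescaled_ne_zero (hs : s ≠ 0) (hdiscr : hestScaledDiscr κ ρ ξ s x ≠ 0) :
    hestD κ ρ ξ (x / s) ≠ 0 := by
  rw [← sq_eq_zero_iff.ne, hestD_rescaled_sq hs]
  exact_mod_cast div_ne_zero hdiscr (pow_ne_zero 2 hs)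

theorem halfAngle_rescaled_sq (hs : s ≠ 0) :
    (hestD κ ρ ξ (x / s) * (s ^ 2 : ℝ) / 2) ^ 2 = (hestScaledAngleSq κ ρ ξ s x : ℂ) := by
  have hs' : (s : ℂ) ≠ 0 := by exact_mod_cast hs
  rw [div_pow, mul_pow, hestD_rescaled_sq hs, hestScaledAngleSq]
  push_cast
  field_simp
  norm_num

theorem sinh_halfAngle_rescaled_div (hs : s ≠ 0) (hdiscr : hestScaledDiscr κ ρ ξ s x ≠ 0) :
    Complex.sinh (hestD κ ρ ξ (x / s) * (s ^ 2 : ℝ) / 2) / hestD κ ρ ξ (x / s) =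
      s ^ 2 / 2 * sinhcSqrt (hestScaledAngleSq κ ρ ξ s x) := by
  have hd := hestD_rescaled_ne_zero hs hdiscr
  rw [← mul_ofReal_sinhcSqrt_of_sq_eq (halfAngle_rescaled_sq hs)]
  push_cast
  field_simp

theorem hestDenom_rescaled (hs : s ≠ 0) (hdiscr : hestScaledDiscr κ ρ ξ s x ≠ 0) :
    hestDenom κ ρ ξ (x / s) (s ^ 2) = hestScaledDenom κ ρ ξ s x := by
  have hs' : (s : ℂ) ≠ 0 := by exact_mod_cast hs
  rw [hestDenom, div_mul_eq_mul_div, mul_div_assoc (_ - _), sinh_halfAngle_rescaled_div hs hdiscr,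
    ← ofReal_coshSqrt_of_sq_eq (halfAngle_rescaled_sq hs), hestScaledDenom]
  push_cast
  field_simp

theorem abs_im_halfAngle_rescaled_lt_pi (hs : s ≠ 0)
    (hangle : |hestScaledAngleSq κ ρ ξ s x| < Real.pi ^ 2) :
    |(hestD κ ρ ξ (x / s) * (s ^ 2 : ℝ) / 2).im| < Real.pi := by
  rw [← Real.norm_eq_abs, ← Complex.norm_real, ← halfAngle_rescaled_sq hs, norm_pow] at hangle
  exact (Complex.abs_im_le_norm _).trans_lt (lt_of_pow_lt_pow_left₀ 2 Real.pi_pos.le hangle)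

theorem drift_add_hestD_rescaled_ne_zero (hκ : 0 < κ) (hξ : ξ ≠ 0) (hs : s ≠ 0) (hxs : x ≠ s) :
    (κ : ℂ) - ρ * ξ * (x / s) + hestD κ ρ ξ (x / s) ≠ 0 := by
  refine drift_add_hestD_ne_zero hκ hξ ?_
  rw [Ne, div_eq_one_iff_eq (by exact_mod_cast hs)]
  exact_mod_cast hxs

theorem hestB_rescaled (hκ : 0 < κ) (hξ : ξ ≠ 0) (hs : s ≠ 0) (hxs : x ≠ s)
    (hdiscr : hestScaledDiscr κ ρ ξ s x ≠ 0) :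
    hestB κ ρ ξ (x / s) (s ^ 2) = hestScaledB κ ρ ξ s x := by
  have hs' : (s : ℂ) ≠ 0 := by exact_mod_cast hs
  rw [hestB_eq_sinh_div_hestDenom hξ (hestD_rescaled_ne_zero hs hdiscr)
    (drift_add_hestD_rescaled_ne_zero hκ hξ hs hxs), sinh_halfAngle_rescaled_div hs hdiscr,
    hestDenom_rescaled hs hdiscr, hestScaledB]
  push_cast
  field_simp

theorem hestA_rescaled (hκ : 0 < κ) (hξ : ξ ≠ 0) (hs : s ≠ 0) (hxs : x ≠ s)
    (hdiscr : hestScaledDiscr κ ρ ξ s x ≠ 0)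
    (hangle : |hestScaledAngleSq κ ρ ξ s x| < Real.pi ^ 2)
    (hdenom : 0 < hestScaledDenom κ ρ ξ s x) :
    hestA κ θ ρ ξ (x / s) (s ^ 2) = ((κ * θ / ξ ^ 2 *
      (s * (κ * s - ρ * ξ * x) - 2 * Real.log (hestScaledDenom κ ρ ξ s x)) : ℝ) : ℂ) := by
  have hs' : (s : ℂ) ≠ 0 := by exact_mod_cast hs
  rw [hestA_eq_log_hestDenom (hestD_rescaled_ne_zero hs hdiscr)
    (drift_add_hestD_rescaled_ne_zero hκ hξ hs hxs) hdenom (hestDenom_rescaled hs hdiscr)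
    (abs_im_halfAngle_rescaled_lt_pi hs hangle)]
  push_cast
  field_simp

theorem hestG_rescaled (hκ : 0 < κ) (hξ : ξ ≠ 0) (hs : s ≠ 0) (hxs : x ≠ s)
    (hdiscr : hestScaledDiscr κ ρ ξ s x ≠ 0)
    (hangle : |hestScaledAngleSq κ ρ ξ s x| < Real.pi ^ 2)
    (hdenom : 0 < hestScaledDenom κ ρ ξ s x)
    (hB : 0 < 1 - 2 * betaT κ ξ t * hestScaledB κ ρ ξ s x) :
    hestG κ θ ξ v ρ t (x / s) (s ^ 2) = hestScaledG κ θ ξ v ρ t s x := by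
  have hlog : Complex.log (1 - 2 * betaT κ ξ t * hestScaledB κ ρ ξ s x) =
      Real.log (1 - 2 * betaT κ ξ t * hestScaledB κ ρ ξ s x) := by
    rw [Complex.ofReal_log hB.le]
    push_cast
    rfl
  rw [hestG, hestA_rescaled hκ hξ hs hxs hdiscr hangle hdenom,
    hestB_rescaled hκ hξ hs hxs hdiscr, hlog, hestScaledG]
  push_cast
  ring

end Rescaled

section NearZero

variable {κ θ ξ v ρ t s x u : ℝ}

theorem contDiff_hestScaledAngleSq {n : WithTop ℕ∞} :
    ContDiff ℝ n (Function.uncurry (hestScaledAngleSq κ ρ ξ)) := by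
  unfold Function.uncurry hestScaledAngleSq hestScaledDiscr
  fun_prop

theorem contDiff_hestScaledDenom {n : WithTop ℕ∞} :
    ContDiff ℝ n (Function.uncurry (hestScaledDenom κ ρ ξ)) := by
  have hangle := contDiff_hestScaledAngleSq (κ := κ) (ρ := ρ) (ξ := ξ) (n := n)
  have hcoef : ContDiff ℝ n fun p : ℝ × ℝ => p.1 * (κ * p.1 - ρ * ξ * p.2) / 2 := by fun_prop
  exact (contDiff_coshSqrt.comp hangle).add (hcoef.mul (contDiff_sinhcSqrt.comp hangle))

theorem contDiffAt_hestScaledB {n : WithTop ℕ∞} (hdenom : hestScaledDenom κ ρ ξ s x ≠ 0) :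
    ContDiffAt ℝ n (Function.uncurry (hestScaledB κ ρ ξ)) (s, x) := by
  have hcoef : ContDiff ℝ n fun p : ℝ × ℝ => p.2 * (p.2 - p.1) / 2 := by fun_prop
  exact (hcoef.mul (contDiff_sinhcSqrt.comp contDiff_hestScaledAngleSq)).contDiffAt.div
    contDiff_hestScaledDenom.contDiffAt hdenom

theorem contDiffAt_hestScaledG {n : WithTop ℕ∞} (hdenom : hestScaledDenom κ ρ ξ s x ≠ 0)
    (hB : 1 - 2 * betaT κ ξ t * hestScaledB κ ρ ξ s x ≠ 0) :
    ContDiffAt ℝ n (Function.uncurry (hestScaledG κ θ ξ v ρ t)) (s, x) := by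
  have hcoef : ContDiffAt ℝ n (fun p : ℝ × ℝ => p.1 * (κ * p.1 - ρ * ξ * p.2)) (s, x) := by
    fun_prop
  have hlog : ContDiffAt ℝ n (fun p : ℝ × ℝ => Real.log (hestScaledDenom κ ρ ξ p.1 p.2)) (s, x) :=
    contDiff_hestScaledDenom.contDiffAt.log hdenom
  have hnum : ContDiffAt ℝ n (fun p : ℝ × ℝ => hestScaledB κ ρ ξ p.1 p.2) (s, x) :=
    contDiffAt_hestScaledB hdenom
  have hden : ContDiffAt ℝ n
      (fun p : ℝ × ℝ => 1 - 2 * betaT κ ξ t * hestScaledB κ ρ ξ p.1 p.2) (s, x) :=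
    contDiffAt_const.sub (contDiffAt_const.mul hnum)
  exact ((contDiffAt_const.mul (hcoef.sub (contDiffAt_const.mul hlog))).add
    (((hnum.mul contDiffAt_const).mul contDiffAt_const).div hden hB)).sub
    (contDiffAt_const.mul (hden.log hB))

theorem hestScaledDenom_zero (κ ρ ξ x : ℝ) : hestScaledDenom κ ρ ξ 0 x = 1 := by
  simp [hestScaledDenom, hestScaledAngleSq, coshSqrt_zero]

theorem hestScaledB_zero (κ ρ ξ x : ℝ) : hestScaledB κ ρ ξ 0 x = x ^ 2 / 2 := by
  simp [hestScaledB, hestScaledDenom_zero, hestScaledAngleSq, sinhcSqrt_zero, sq]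

theorem one_sub_betaT_mul_hestScaledB_zero (κ ρ ξ t x : ℝ) :
    1 - 2 * betaT κ ξ t * hestScaledB κ ρ ξ 0 x = 1 - betaT κ ξ t * x ^ 2 := by
  rw [hestScaledB_zero]
  ring

theorem finite_setOf_hestScaledDiscr_eq_zero (hκ : κ ≠ 0) :
    {s | hestScaledDiscr κ ρ ξ s x = 0}.Finite := by
  set p : Polynomial ℝ := .C (κ ^ 2) * .X ^ 2 + .C (x * ξ * (ξ - 2 * κ * ρ)) * .X +
    .C ((x * ξ) ^ 2 * (ρ ^ 2 - 1)) with hp_def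
  have hp : p ≠ 0 := by
    apply Polynomial.ne_zero_of_natDegree_gt (n := 1)
    rw [hp_def, Polynomial.natDegree_quadratic (pow_ne_zero 2 hκ)]
    norm_num
  convert Polynomial.finite_setOfPred_isRoot hp using 3 with s
  simp only [hestScaledDiscr, Polynomial.IsRoot, hp_def]
  simp only [Polynomial.eval_add, Polynomial.eval_mul, Polynomial.eval_pow, Polynomial.eval_C,
    Polynomial.eval_X]
  ring_nf

theorem eventually_hestScaled_pos (hu : betaT κ ξ t * u ^ 2 < 1) :
    ∀ᶠ p : ℝ × ℝ in 𝓝 (0, u), |hestScaledAngleSq κ ρ ξ p.1 p.2| < Real.pi ^ 2 ∧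
      0 < hestScaledDenom κ ρ ξ p.1 p.2 ∧
      0 < 1 - 2 * betaT κ ξ t * hestScaledB κ ρ ξ p.1 p.2 := by
  have hdenom₀ : 0 < hestScaledDenom κ ρ ξ 0 u := by simp [hestScaledDenom_zero]
  have hangle : ContinuousAt (fun p : ℝ × ℝ => |hestScaledAngleSq κ ρ ξ p.1 p.2|) (0, u) :=
    (contDiff_hestScaledAngleSq (n := 0)).continuous.abs.continuousAt
  have hdenom : ContinuousAt (fun p : ℝ × ℝ => hestScaledDenom κ ρ ξ p.1 p.2) (0, u) :=
    (contDiff_hestScaledDenom (n := 0)).continuous.continuousAt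
  have hB : ContinuousAt (fun p : ℝ × ℝ => hestScaledB κ ρ ξ p.1 p.2) (0, u) :=
    (contDiffAt_hestScaledB (n := 0) hdenom₀.ne').continuousAt
  refine (hangle.eventually_lt_const ?_).and ((hdenom.eventually_const_lt hdenom₀).and
    ((continuousAt_const.sub (continuousAt_const.mul hB)).eventually_const_lt ?_))
  · simp [hestScaledAngleSq, Real.pi_pos]
  · simpa [one_sub_betaT_mul_hestScaledB_zero] using hu

theorem eventually_nhds_ne_and_hestScaledDiscr_ne_zero (hκ : κ ≠ 0) :
    ∀ᶠ s in 𝓝[>] (0 : ℝ), ∀ᶠ x in 𝓝 u, x ≠ s ∧ hestScaledDiscr κ ρ ξ s x ≠ 0 := by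
  have hfinite : ({s | hestScaledDiscr κ ρ ξ s u = 0} ∪ {u}).Finite :=
    (finite_setOf_hestScaledDiscr_eq_zero hκ).union (Set.finite_singleton u)
  have hle : 𝓝[>] (0 : ℝ) ≤ cofinite := (nhdsGT_le_nhdsNE 0).trans (nhdsNE_le_cofinite 0)
  filter_upwards [hle hfinite.compl_mem_cofinite] with s hs
  simp only [Set.mem_compl_iff, Set.mem_union, Set.mem_ofPred_eq, Set.mem_singleton_iff,
    not_or] at hs
  have hcont : ContinuousAt (hestScaledDiscr κ ρ ξ s) u := by
    unfold hestScaledDiscr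
    fun_prop
  exact (continuousAt_id.eventually_ne (Ne.symm hs.2)).and (hcont.eventually_ne hs.1)

theorem eventually_hestLambda_eventuallyEq (hκ : 0 < κ) (hξ : ξ ≠ 0)
    (hu : betaT κ ξ t * u ^ 2 < 1) :
    ∀ᶠ τ in 𝓝[>] (0 : ℝ), hestLambda κ θ ξ v ρ t τ =ᶠ[𝓝 u]
      fun x => ((√τ * hestScaledG κ θ ξ v ρ t √τ x : ℝ) : ℂ) := by
  filter_upwards [self_mem_nhdsWithin,
    tendsto_sqrt_nhdsGT_zero.eventually
      (eventually_nhds_ne_and_hestScaledDiscr_ne_zero (ρ := ρ) (ξ := ξ) hκ.ne'),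
    tendsto_sqrt_nhdsGT_zero.eventually
      ((eventually_hestScaled_pos (ρ := ρ) hu).curry_nhds.filter_mono nhdsWithin_le_nhds)]
    with τ hτ hgeneric hpos
  filter_upwards [hgeneric, hpos] with x ⟨hxs, hdiscr⟩ ⟨hangle, hdenom, hB⟩
  have hG := hestG_rescaled (θ := θ) (v := v) hκ hξ (Real.sqrt_pos.mpr hτ).ne'
    hxs hdiscr hangle hdenom hB
  rw [Real.sq_sqrt (le_of_lt hτ)] at hG
  rw [hestLambda, hestLambdaC, hG, Complex.ofReal_mul]

end NearZero

theorem mul_sq_lt_one_of_abs_lt_one_div_sqrt {b u : ℝ} (h : |u| < 1 / √b) : b * u ^ 2 < 1 := by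
  rcases le_or_gt b 0 with hb | hb
  · linarith [mul_nonpos_of_nonpos_of_nonneg hb (sq_nonneg u)]
  · rwa [lt_div_iff₀ (Real.sqrt_pos.mpr hb), ← sq_lt_one_iff₀ (by positivity), mul_pow, sq_abs,
      Real.sq_sqrt hb.le, mul_comm] at h

theorem stmt11_general {κ θ ξ v ρ t u : ℝ} (hκ : 0 < κ) (hξ : ξ ≠ 0)
    (hu : betaT κ ξ t * u ^ 2 < 1) :
    (∀ᶠ τ in 𝓝[>] (0 : ℝ),
      DifferentiableAt ℝ (hestLambda κ θ ξ v ρ t τ) u ∧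
      (deriv (hestLambda κ θ ξ v ρ t τ) u).im = 0) ∧
    Tendsto (fun τ : ℝ => deriv (hestLambda κ θ ξ v ρ t τ) u)
      (𝓝[>] (0 : ℝ)) (𝓝 0) := by
  set F := hestScaledG κ θ ξ v ρ t
  have hF : ContDiffAt ℝ 1 (Function.uncurry F) (0, u) := by
    apply contDiffAt_hestScaledG
    · simp [hestScaledDenom_zero]
    · rw [one_sub_betaT_mul_hestScaledB_zero]
      exact (sub_pos.mpr hu).ne'
  have hsqrt : Tendsto Real.sqrt (𝓝[>] 0) (𝓝 0) :=
    tendsto_sqrt_nhdsGT_zero.mono_right nhdsWithin_le_nhds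
  have hderiv : ∀ᶠ τ in 𝓝[>] (0 : ℝ),
      HasDerivAt (hestLambda κ θ ξ v ρ t τ) ((√τ * deriv (F √τ) u : ℝ) : ℂ) u := by
    filter_upwards [eventually_hestLambda_eventuallyEq hκ hξ hu,
      hsqrt.eventually (eventually_differentiableAt_of_contDiffAt_uncurry hF)] with τ hΛ hdiff
    exact (hdiff.hasDerivAt.const_mul √τ).ofReal_comp.congr_of_eventuallyEq hΛ
  have hlim : Tendsto (fun τ => √τ * deriv (F √τ) u) (𝓝[>] 0) (𝓝 0) := by
    simpa using hsqrt.mul ((continuousAt_deriv_of_contDiffAt_uncurry hF).tendsto.comp hsqrt)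
  refine ⟨hderiv.mono fun τ h => ⟨h.differentiableAt, by rw [h.deriv, Complex.ofReal_im]⟩, ?_⟩
  exact (Complex.continuous_ofReal.tendsto' 0 0 Complex.ofReal_zero).comp hlim |>.congr'
    (hderiv.mono fun τ h => h.deriv.symm)

theorem stmt11 (κ θ ξ v ρ t : ℝ) (hκ : 0 < κ) (hθ : 0 < θ) (hξ : 0 < ξ)
    (hv : 0 < v) (hρ : ρ ∈ Set.Ioo (-1 : ℝ) 1) (ht : 0 < t)
    (u : ℝ) (hu : |u| < 1 / Real.sqrt (betaT κ ξ t)) :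
    (∀ᶠ τ in 𝓝[>] (0 : ℝ),
      DifferentiableAt ℝ (hestLambda κ θ ξ v ρ t τ) u ∧
      (deriv (hestLambda κ θ ξ v ρ t τ) u).im = 0) ∧
    Tendsto (fun τ : ℝ => deriv (hestLambda κ θ ξ v ρ t τ) u)
      (𝓝[>] (0 : ℝ)) (𝓝 0) :=
  stmt11_general hκ hξ.ne' (mul_sq_lt_one_of_abs_lt_one_div_sqrt hu)

end
end
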